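/- Let H be a pointed Hopf algebra of discrete corepresentation type over an algebraically closed field. If a and b are grouplike elements of H such that P(1,a) and P(1,b) each contain a nontrivial skew primitive element, then ab = ba. -/

import Mathlib

open TensorProduct



section Basic

variable (K : Type) [CommRing K] (H : Type) [AddCommGroup H] [Module K H] [Coalgebra K H]

/-- A grouplike element of a coalgebra. -/
def IsGrouplike (g : H) : Prop :=
  Coalgebra.counit (R := K) g = 1 ∧ Coalgebra.comul (R := K) g = g ⊗ₜ[K] g

/-- The space `P(g,h)` of `(g,h)`-skew primitive elements. -/
noncomputable def skewPrim (g h : H) : Submodule K H :=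
  LinearMap.ker (Coalgebra.comul (R := K) (A := H)
    - (TensorProduct.mk K H H g + (TensorProduct.mk K H H).flip h))

lemma mem_skewPrim {g h x : H} :
    x ∈ skewPrim K H g h ↔ Coalgebra.comul (R := K) x = g ⊗ₜ[K] x + x ⊗ₜ[K] h := by
  rw [skewPrim, LinearMap.mem_ker, LinearMap.sub_apply, sub_eq_zero, LinearMap.add_apply]
  rfl

/-- A submodule which is a subcoalgebra. -/
def IsSubcoalgebra (D : Submodule K H) : Prop :=
  ∀ x ∈ D, Coalgebra.comul (R := K) x ∈ LinearMap.range (TensorProduct.map D.subtype D.subtype)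

/-- A coalgebra is pointed if every simple subcoalgebra is one-dimensional. -/
def IsPointedCoalgebra : Prop :=
  ∀ D : Submodule K H, IsSubcoalgebra K H D → D ≠ ⊥ →
    (∀ D' : Submodule K H, IsSubcoalgebra K H D' → D' ≤ D → D' = ⊥ ∨ D' = D) →
    Module.finrank K ↥D = 1

end Basic

section Comodules

variable (K : Type) [CommRing K] (H : Type) [AddCommGroup H] [Module K H] [Coalgebra K H]

/-- A (finite or infinite dimensional) right `H`-comodule. -/
structure Comod where
  carrier : Type
  [acg : AddCommGroup carrier]
  [mod : Module K carrier]
  ρ : carrier →ₗ[K] carrier ⊗[K] H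
  counit_comp : ∀ m : carrier,
    (TensorProduct.rid K carrier)
      ((LinearMap.lTensor carrier (Coalgebra.counit (R := K) (A := H))) (ρ m)) = m
  coassoc : ∀ m : carrier,
    (LinearMap.lTensor carrier (Coalgebra.comul (R := K) (A := H))) (ρ m)
      = (TensorProduct.assoc K carrier H H) ((LinearMap.rTensor H ρ) (ρ m))

attribute [instance] Comod.acg Comod.mod

/-- A morphism of right `H`-comodules. -/
structure ComodHom (M N : Comod K H) where
  toLin : M.carrier →ₗ[K] N.carrier
  compat : ∀ m : M.carrier, N.ρ (toLin m) = (LinearMap.rTensor H toLin) (M.ρ m)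

/-- Isomorphism of comodules. -/
def ComodIso (M N : Comod K H) : Prop :=
  ∃ f : ComodHom K H M N, Function.Bijective f.toLin

/-- An indecomposable comodule: it is nonzero, and (equivalently to the usual definition,
since idempotents split in comodule categories) every idempotent endomorphism is `0` or `1`. -/
def Comod.Indec (M : Comod K H) : Prop :=
  (∃ m : M.carrier, m ≠ 0) ∧
    ∀ f : ComodHom K H M M, f.toLin ∘ₗ f.toLin = f.toLin →
      f.toLin = 0 ∨ f.toLin = LinearMap.id

/-- A submodule of a comodule which is a subcomodule. -/
def IsSubcomod (M : Comod K H) (N : Submodule K M.carrier) : Prop :=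
  ∀ m ∈ N, M.ρ m ∈ LinearMap.range (LinearMap.rTensor H N.subtype)

/-- The coaction of `M` factors through the subcoalgebra `D`, i.e. `M` is a `D`-comodule. -/
def CoactsThrough (M : Comod K H) (D : Submodule K H) : Prop :=
  ∀ m : M.carrier, M.ρ m ∈ LinearMap.range (LinearMap.lTensor M.carrier D.subtype)

/-- `M` has dimension vector `d` : it admits a composition series whose successive quotients
are the one-dimensional comodules associated to grouplike elements, where for every `h` the
grouplike `h` occurs exactly `d h` times. -/
def HasDimVector (M : Comod K H) (d : H → ℕ) : Prop :=
  ∃ (k : ℕ) (F : Fin (k+1) → Submodule K M.carrier) (g : Fin k → H),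
    F 0 = ⊥ ∧ F (Fin.last k) = ⊤ ∧
    (∀ i : Fin k, F i.castSucc ≤ F i.succ) ∧
    (∀ i : Fin (k+1), IsSubcomod K H M (F i)) ∧
    (∀ i : Fin k, IsGrouplike K H (g i)) ∧
    (∀ i : Fin k, ∃ m : M.carrier, m ∈ F i.succ ∧ m ∉ F i.castSucc ∧
        F i.succ = F i.castSucc ⊔ Submodule.span K {m}) ∧
    (∀ i : Fin k, ∀ m ∈ F i.succ,
        M.ρ m - m ⊗ₜ[K] (g i) ∈ LinearMap.range (LinearMap.rTensor H (F i.castSucc).subtype)) ∧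
    (∀ h : H, d h = Nat.card {i : Fin k // g i = h})

/-- A pointed coalgebra is of discrete corepresentation type if for every dimension vector `d`
there are only finitely many isomorphism classes of indecomposable comodules with
dimension vector `d`. -/
def DiscreteCorepType : Prop :=
  ∀ d : H → ℕ, ∃ (N : ℕ) (R : Fin N → Comod K H),
    ∀ M : Comod K H, M.Indec K H → HasDimVector K H M d → ∃ i, ComodIso K H M (R i)

/-- A subcoalgebra `D ≤ H` is of finite corepresentation type: there are only finitely many
isomorphism classes of finite-dimensional indecomposable comodules whose coaction factors
through `D`. -/
def FinCorepTypeOn (D : Submodule K H) : Prop :=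
  ∃ (N : ℕ) (R : Fin N → Comod K H),
    ∀ M : Comod K H, M.Indec K H → Module.Finite K M.carrier → CoactsThrough K H M D →
      ∃ i, ComodIso K H M (R i)

/-- A coalgebra is of finite corepresentation type. -/
def FinCorepType : Prop := FinCorepTypeOn K H ⊤

end Comodules

/-!
If `a * b ≠ b * a`, then `a`, `b`, `a * b`, `b * a` are four distinct grouplikes, and
`a * y ∈ P(a, ab)`, `y * a ∈ P(a, ba)`, `x * b ∈ P(b, ab)`, `b * x ∈ P(b, ba)` are nontrivial skew
primitives: the Ext quiver contains a square, every vertex of `{a, b}` being joined to every vertex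
of `{ab, ba}`. Putting the weights `1`, `t`, `1`, `1` on its arrows gives, for every scalar `t`, a
comodule of dimension four whose dimension vector does not depend on `t`. A morphism from the
comodule of `s` to that of `t` is a scalar `r` with `r * s = r * t`, so these comodules are
indecomposable and pairwise nonisomorphic. Over an infinite field this contradicts discreteness.
-/

section Regular

lemma mul_left_mem_span_singleton {R A : Type*} [CommSemiring R] [Semiring A] [Algebra R A]
    {k x z : A} (hk : IsLeftRegular k) :
    k * x ∈ Submodule.span R {k * z} ↔ x ∈ Submodule.span R {z} := by
  simp only [Submodule.mem_span_singleton, ← mul_smul_comm, hk.eq_iff]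

lemma mul_right_mem_span_singleton {R A : Type*} [CommSemiring R] [Semiring A] [Algebra R A]
    {k x z : A} (hk : IsRightRegular k) :
    x * k ∈ Submodule.span R {z * k} ↔ x ∈ Submodule.span R {z} := by
  simp only [Submodule.mem_span_singleton, ← smul_mul_assoc, hk.eq_iff]

lemma injective_sumElim_of_not_commute {M : Type*} [Monoid M] {a b : M} (ha : IsRegular a)
    (hb : IsRegular b) (hab : ¬ Commute a b) :
    Function.Injective (Sum.elim ![a, b] ![a * b, b * a]) := by
  have ha_one : a ≠ 1 := by rintro rfl; exact hab (.one_left b)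
  have hb_one : b ≠ 1 := by rintro rfl; exact hab (.one_right a)
  have hne : a ≠ b := by rintro rfl; exact hab (.refl a)
  have hmul : a * b ≠ b * a := hab
  refine Function.Injective.sumElim ?_ ?_ ?_
  · simpa [Fin.forall_fin_two, Function.Injective] using ⟨hne, hne.symm⟩
  · simpa [Fin.forall_fin_two, Function.Injective] using ⟨hmul, hmul.symm⟩
  · simp [Fin.forall_fin_two, eq_comm (a := a), eq_comm (a := b), ha.left, ha.right, hb.left,
      hb.right, ha_one.symm, hb_one.symm]

end Regular

section SkewPrimitive

lemma isGrouplike_iff_isGroupLikeElem {K H : Type} [CommRing K] [AddCommGroup H] [Module K H]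
    [Coalgebra K H] {g : H} : IsGrouplike K H g ↔ IsGroupLikeElem K g :=
  (isGroupLikeElem_iff K g).symm

lemma IsGrouplike.mul {K H : Type} [CommRing K] [Ring H] [Bialgebra K H] {g h : H}
    (hg : IsGrouplike K H g) (hh : IsGrouplike K H h) : IsGrouplike K H (g * h) := by
  rw [isGrouplike_iff_isGroupLikeElem] at *
  exact hg.mul hh

lemma IsGrouplike.isRegular {K H : Type} [CommRing K] [Ring H] [HopfAlgebra K H] {g : H}
    (hg : IsGrouplike K H g) : IsRegular g :=
  (isGrouplike_iff_isGroupLikeElem.1 hg).isUnit.isRegular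

lemma counit_eq_zero_of_mem_skewPrim {K H : Type} [CommRing K] [AddCommGroup H] [Module K H]
    [Coalgebra K H] {g h x : H} (hg : IsGrouplike K H g) (hh : IsGrouplike K H h)
    (hx : x ∈ skewPrim K H g h) : Coalgebra.counit (R := K) x = 0 := by
  have counit_smul : x + Coalgebra.counit (R := K) x • h = x := by
    have := congrArg (TensorProduct.lid K H) (Coalgebra.rTensor_counit_comul (R := K) x)
    simpa [(mem_skewPrim K H).1 hx, hg.1] using this
  simpa [hh.1] using congrArg (Coalgebra.counit (R := K)) (add_eq_left.1 counit_smul)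

/-- A nontrivial `(g, h)`-skew primitive element: one that is not a multiple of `g - h`. -/
structure IsNontrivialSkewPrim (K : Type) {H : Type} [CommRing K] [AddCommGroup H] [Module K H]
    [Coalgebra K H] (g h x : H) : Prop where
  mem : x ∈ skewPrim K H g h
  notMem_span : x ∉ Submodule.span K {g - h}

namespace IsNontrivialSkewPrim

variable {K H : Type} [CommRing K] [Ring H] [Bialgebra K H] {g h k x : H}

lemma mul_left (hx : IsNontrivialSkewPrim K g h x) (hk : IsGrouplike K H k)
    (hreg : IsLeftRegular k) : IsNontrivialSkewPrim K (k * g) (k * h) (k * x) where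
  mem := by
    have := (mem_skewPrim K H).1 hx.mem
    rw [mem_skewPrim]
    simp [hk.2, this, mul_add]
  notMem_span := by
    rw [← mul_sub, mul_left_mem_span_singleton hreg]
    exact hx.notMem_span

lemma mul_right (hx : IsNontrivialSkewPrim K g h x) (hk : IsGrouplike K H k)
    (hreg : IsRightRegular k) : IsNontrivialSkewPrim K (g * k) (h * k) (x * k) where
  mem := by
    have := (mem_skewPrim K H).1 hx.mem
    rw [mem_skewPrim]
    simp [hk.2, this, add_mul]
  notMem_span := by
    rw [← sub_mul, mul_right_mem_span_singleton hreg]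
    exact hx.notMem_span

end IsNontrivialSkewPrim

end SkewPrimitive

section TensorCoeff

variable {R N ι : Type*} [CommRing R] [AddCommGroup N] [Module R N] [Fintype ι] [DecidableEq ι]

/-- The coefficients `tᵢ` of a tensor `t = ∑ᵢ eᵢ ⊗ tᵢ` in `Rᶥ ⊗ N`, with `eᵢ` the standard
basis of `Rᶥ`. -/
noncomputable def tensorCoeff : (ι → R) ⊗[R] N ≃ₗ[R] (ι → N) :=
  TensorProduct.comm R (ι → R) N ≪≫ₗ TensorProduct.piScalarRight R R N ι

@[simp]
lemma tensorCoeff_tmul (v : ι → R) (x : N) (i : ι) :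
    tensorCoeff (v ⊗ₜ[R] x) i = v i • x := by
  simp [tensorCoeff]

lemma sum_single_tmul_tensorCoeff (t : (ι → R) ⊗[R] N) :
    ∑ i, (Pi.single i (1 : R) : ι → R) ⊗ₜ[R] tensorCoeff t i = t := by
  apply tensorCoeff.injective
  ext i
  simp [Finset.sum_apply, Pi.single_apply, ite_smul]

lemma mem_range_rTensor_subtype_of_tensorCoeff {S : Submodule R (ι → R)} {t : (ι → R) ⊗[R] N}
    (ht : ∀ i, tensorCoeff t i = 0 ∨ Pi.single i 1 ∈ S) :
    t ∈ LinearMap.range (LinearMap.rTensor N S.subtype) := by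
  rw [← sum_single_tmul_tensorCoeff t]
  refine Submodule.sum_mem _ fun i _ => ?_
  rcases ht i with hi | hi
  · rw [hi, TensorProduct.tmul_zero]
    exact Submodule.zero_mem _
  · exact ⟨⟨_, hi⟩ ⊗ₜ tensorCoeff t i, rfl⟩

end TensorCoeff

section Comodule

variable {K H : Type} [CommRing K] [AddCommGroup H] [Module K H] [Coalgebra K H]
  {M N P : Comod K H}

lemma ComodIso.symm (hMN : ComodIso K H M N) : ComodIso K H N M := by
  obtain ⟨f, hf⟩ := hMN
  let e := LinearEquiv.ofBijective f.toLin hf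
  refine ⟨⟨e.symm, fun n => ?_⟩, e.symm.bijective⟩
  obtain ⟨m, rfl⟩ := hf.surjective n
  have he : e.symm.toLinearMap ∘ₗ f.toLin = LinearMap.id := LinearMap.ext e.symm_apply_apply
  rw [f.compat, ← LinearMap.rTensor_comp_apply, he, LinearMap.rTensor_id_apply]
  exact congrArg M.ρ (e.symm_apply_apply m)

lemma ComodIso.trans (hMN : ComodIso K H M N) (hNP : ComodIso K H N P) : ComodIso K H M P := by
  obtain ⟨f, hf⟩ := hMN
  obtain ⟨g, hg⟩ := hNP
  refine ⟨⟨g.toLin ∘ₗ f.toLin, fun m => ?_⟩, hg.comp hf⟩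
  rw [LinearMap.comp_apply, g.compat, f.compat, LinearMap.rTensor_comp_apply]

lemma DiscreteCorepType.exists_ne_comodIso (hH : DiscreteCorepType K H) {T : Type*} [Infinite T]
    (M : T → Comod K H) (d : H → ℕ) (hindec : ∀ t, (M t).Indec K H)
    (hdim : ∀ t, HasDimVector K H (M t) d) : ∃ s t, s ≠ t ∧ ComodIso K H (M s) (M t) := by
  obtain ⟨n, R, hR⟩ := hH d
  choose r hr using fun t => hR (M t) (hindec t) (hdim t)
  obtain ⟨s, t, hst, hrst⟩ := Finite.exists_ne_map_eq_of_infinite r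
  exact ⟨s, t, hst, (hr s).trans (hrst ▸ (hr t).symm)⟩

end Comodule

section Brick

variable {K H : Type} [Field K] [AddCommGroup H] [Module K H] [Coalgebra K H]

lemma Comod.indec_of_forall_eq_smul_id {M : Comod K H} [Nontrivial M.carrier]
    (hM : ∀ f : ComodHom K H M M, ∃ r : K, f.toLin = r • LinearMap.id) : M.Indec K H := by
  refine ⟨exists_ne 0, fun f hf => ?_⟩
  obtain ⟨r, hr⟩ := hM f
  obtain ⟨m, hm⟩ := exists_ne (0 : M.carrier)
  have hrr : r * r = r := by
    refine smul_left_injective K hm ?_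
    simpa [hr, mul_smul] using LinearMap.congr_fun hf m
  rcases IsIdempotentElem.iff_eq_zero_or_one.1 hrr with rfl | rfl
  · exact .inl (hr.trans (zero_smul _ _))
  · exact .inr (hr.trans (one_smul _ _))

end Brick

section MatrixCoaction

variable {K H ι : Type*} [CommRing K] [AddCommGroup H] [Module K H] [Fintype ι] [DecidableEq ι]

/-- The coaction `eⱼ ↦ ∑ᵢ eᵢ ⊗ Cᵢⱼ` on `Kᶥ`. -/
noncomputable def matrixCoaction (C : Matrix ι ι H) : (ι → K) →ₗ[K] (ι → K) ⊗[K] H :=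
  Fintype.linearCombination K fun j => ∑ i, (Pi.single i 1 : ι → K) ⊗ₜ[K] C i j

@[simp]
lemma matrixCoaction_single (C : Matrix ι ι H) (j : ι) :
    matrixCoaction C (Pi.single j (1 : K)) = ∑ i, (Pi.single i 1 : ι → K) ⊗ₜ[K] C i j := by
  simp [matrixCoaction]

lemma tensorCoeff_matrixCoaction (C : Matrix ι ι H) (v : ι → K) (i : ι) :
    tensorCoeff (matrixCoaction C v) i = ∑ j, v j • C i j := by
  simp [matrixCoaction, Fintype.linearCombination_apply, Finset.sum_apply, Pi.single_apply,
    ite_smul]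

end MatrixCoaction

section MultiplicativeMatrix

/-- A multiplicative matrix `C` over a coalgebra: `Δ(Cᵢⱼ) = ∑ₖ Cᵢₖ ⊗ Cₖⱼ` and `ε(Cᵢⱼ) = δᵢⱼ`.
These are the coefficient matrices of the comodule structures on `Kᶥ`. -/
structure IsMultiplicativeMatrix (K : Type*) {H ι : Type*} [CommRing K] [AddCommGroup H]
    [Module K H] [Coalgebra K H] [Fintype ι] [DecidableEq ι] (C : Matrix ι ι H) : Prop where
  counit_apply : ∀ i j, Coalgebra.counit (R := K) (C i j) = (1 : Matrix ι ι K) i j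
  comul_apply : ∀ i j, Coalgebra.comul (R := K) (C i j) = ∑ k, C i k ⊗ₜ[K] C k j

/-- The matrix identity `D A = A C`, for a scalar matrix `A`, expressing that `A` intertwines the
coactions with coefficient matrices `C` and `D`. -/
def IsMatrixIntertwiner {K H ι κ : Type*} [CommRing K] [AddCommGroup H] [Module K H] [Fintype ι]
    [Fintype κ] (A : Matrix κ ι K) (C : Matrix ι ι H) (D : Matrix κ κ H) : Prop :=
  ∀ i j, ∑ k, A k j • D i k = ∑ k, A i k • C k j

variable {K H ι κ : Type} [CommRing K] [AddCommGroup H] [Module K H] [Coalgebra K H]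
  [Fintype ι] [DecidableEq ι] [Fintype κ] [DecidableEq κ]

/-- The comodule structure on `Kᶥ` with a given multiplicative matrix of coefficients. -/
noncomputable abbrev IsMultiplicativeMatrix.comod {C : Matrix ι ι H}
    (hC : IsMultiplicativeMatrix K C) : Comod K H where
  carrier := ι → K
  ρ := matrixCoaction C
  counit_comp := by
    refine LinearMap.congr_fun (f := (TensorProduct.rid K _).toLinearMap ∘ₗ
      LinearMap.lTensor _ Coalgebra.counit ∘ₗ matrixCoaction C) (g := LinearMap.id) ?_
    ext j i
    simp [hC.counit_apply, Matrix.one_apply, Finset.sum_apply, Pi.single_apply, ite_apply]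
  coassoc := by
    refine LinearMap.congr_fun (f := LinearMap.lTensor _ Coalgebra.comul ∘ₗ matrixCoaction C)
      (g := (TensorProduct.assoc K _ H H).toLinearMap ∘ₗ
        LinearMap.rTensor H (matrixCoaction C) ∘ₗ matrixCoaction C) ?_
    ext j
    simpa [hC.comul_apply, TensorProduct.tmul_sum, TensorProduct.sum_tmul] using Finset.sum_comm

lemma ComodHom.isMatrixIntertwiner {C : Matrix ι ι H} {D : Matrix κ κ H}
    {hC : IsMultiplicativeMatrix K C} {hD : IsMultiplicativeMatrix K D}
    (f : ComodHom K H hC.comod hD.comod) :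
    IsMatrixIntertwiner (LinearMap.toMatrix' f.toLin) C D := by
  intro i j
  have := congrFun (congrArg tensorCoeff (f.compat (Pi.single j 1))) i
  simpa [tensorCoeff_matrixCoaction, LinearMap.toMatrix'_apply, Finset.sum_apply] using this

end MultiplicativeMatrix

section CoordFlag

variable {K ι : Type*} [CommRing K] {n : ℕ} (e : ι ≃ Fin n)

/-- The standard flag of `Kᶥ` for an enumeration `e` of `ι`: the `k`-th term is spanned by the
basis vectors of the first `k` indices. -/
def coordFlag (k : Fin (n + 1)) : Submodule K (ι → K) :=
  Submodule.pi {i | k ≤ (e i).castSucc} fun _ => ⊥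

variable {e}

lemma mem_coordFlag {k : Fin (n + 1)} {v : ι → K} :
    v ∈ coordFlag e k ↔ ∀ i, k ≤ (e i).castSucc → v i = 0 := by
  simp [coordFlag, Submodule.mem_pi]

lemma coordFlag_zero : coordFlag (K := K) e 0 = ⊥ := by
  ext v
  simp [mem_coordFlag, funext_iff]

lemma coordFlag_last : coordFlag (K := K) e (Fin.last n) = ⊤ := by
  ext v
  simp [mem_coordFlag, Fin.last_le_iff, (Fin.castSucc_lt_last _).ne]

lemma coordFlag_mono : Monotone (coordFlag (K := K) e) := fun _ _ hkl _ hv =>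
  mem_coordFlag.2 fun i hi => mem_coordFlag.1 hv i (hkl.trans hi)

variable [DecidableEq ι]

lemma single_mem_coordFlag [Nontrivial K] {k : Fin (n + 1)} {i : ι} :
    Pi.single i (1 : K) ∈ coordFlag e k ↔ (e i).castSucc < k := by
  simp only [mem_coordFlag, Pi.single_apply, ite_eq_right_iff, one_ne_zero, imp_false]
  exact ⟨fun h => lt_of_not_ge fun hi => h i hi rfl, fun hi j hj hji => by
    subst hji; exact hj.not_gt hi⟩

lemma coordFlag_succ [Nontrivial K] (i : ι) :
    coordFlag (K := K) e (e i).succ =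
      coordFlag e (e i).castSucc ⊔ Submodule.span K {Pi.single i 1} := by
  apply le_antisymm
  · intro v hv
    rw [← sub_add_cancel v (v i • Pi.single i (1 : K))]
    refine Submodule.add_mem_sup (mem_coordFlag.2 fun j hj => ?_)
      (Submodule.smul_mem _ _ (Submodule.mem_span_singleton_self _))
    rcases eq_or_ne j i with rfl | hji
    · simp
    · have : e i < e j := lt_of_le_of_ne (by simpa using hj) (e.injective.ne hji.symm)
      simp [hji, mem_coordFlag.1 hv j (Fin.succ_le_castSucc_iff.2 this)]
  · rw [sup_le_iff, Submodule.span_singleton_le_iff_mem, single_mem_coordFlag]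
    exact ⟨coordFlag_mono Fin.castSucc_lt_succ.le, Fin.castSucc_lt_succ⟩

end CoordFlag

section DimVector

variable {K H ι : Type} [CommRing K] [Nontrivial K] [AddCommGroup H] [Module K H] [Fintype ι]
  [DecidableEq ι] {n : ℕ} {e : ι ≃ Fin n} {C : Matrix ι ι H}

lemma mem_range_rTensor_coordFlag {k : Fin (n + 1)} {t : (ι → K) ⊗[K] H}
    (ht : ∀ i, k ≤ (e i).castSucc → tensorCoeff t i = 0) :
    t ∈ LinearMap.range (LinearMap.rTensor H (coordFlag e k).subtype) :=
  mem_range_rTensor_subtype_of_tensorCoeff fun i =>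
    (le_or_gt k (e i).castSucc).imp (ht i) single_mem_coordFlag.2

lemma matrixCoaction_mem_coordFlag (hC : C.BlockTriangular e) {k : Fin (n + 1)} {v : ι → K}
    (hv : v ∈ coordFlag e k) :
    matrixCoaction C v ∈ LinearMap.range (LinearMap.rTensor H (coordFlag e k).subtype) := by
  refine mem_range_rTensor_coordFlag fun i hi => ?_
  rw [tensorCoeff_matrixCoaction]
  refine Finset.sum_eq_zero fun j _ => ?_
  rcases le_or_gt (e i) (e j) with hij | hji
  · rw [mem_coordFlag.1 hv j (hi.trans (Fin.castSucc_le_castSucc_iff.2 hij)), zero_smul]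
  · rw [hC hji, smul_zero]

lemma matrixCoaction_sub_tmul_mem_coordFlag (hC : C.BlockTriangular e) {k : ι} {v : ι → K}
    (hv : v ∈ coordFlag e (e k).succ) :
    matrixCoaction C v - v ⊗ₜ[K] C k k ∈
      LinearMap.range (LinearMap.rTensor H (coordFlag e (e k).castSucc).subtype) := by
  refine mem_range_rTensor_coordFlag fun i hki => ?_
  have v_eq_zero {j : ι} (hj : e k < e j) : v j = 0 :=
    mem_coordFlag.1 hv j (Fin.succ_le_castSucc_iff.2 hj)
  have hdiag : ∑ j, v j • C i j = v i • C i i := by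
    refine Finset.sum_eq_single_of_mem i (Finset.mem_univ i) fun j _ hji => ?_
    rcases lt_or_gt_of_ne (e.injective.ne hji) with h | h
    · rw [hC h, smul_zero]
    · rw [v_eq_zero ((Fin.castSucc_le_castSucc_iff.1 hki).trans_lt h), zero_smul]
  rw [map_sub, Pi.sub_apply, tensorCoeff_matrixCoaction, tensorCoeff_tmul, hdiag]
  rcases (Fin.castSucc_le_castSucc_iff.1 hki).eq_or_lt with h | h
  · rw [e.injective h, sub_self]
  · rw [v_eq_zero h, zero_smul, zero_smul, sub_self]

lemma IsMultiplicativeMatrix.hasDimVector_comod [Coalgebra K H] (hC : IsMultiplicativeMatrix K C)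
    (e : ι ≃ Fin n) (htri : C.BlockTriangular e) (hdiag : ∀ i, IsGrouplike K H (C i i)) :
    HasDimVector K H hC.comod fun g => Nat.card {i // C i i = g} := by
  refine ⟨n, coordFlag e, fun k => C (e.symm k) (e.symm k), coordFlag_zero, coordFlag_last,
    fun k => coordFlag_mono Fin.castSucc_lt_succ.le,
    fun k v hv => matrixCoaction_mem_coordFlag htri hv, fun k => hdiag _, ?_, ?_,
    fun g => Nat.card_congr (e.subtypeEquiv fun i => by simp only [e.symm_apply_apply])⟩
  · refine e.surjective.forall.2 fun i => ⟨Pi.single i 1, ?_, ?_, coordFlag_succ i⟩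
    · exact single_mem_coordFlag.2 Fin.castSucc_lt_succ
    · exact single_mem_coordFlag.not.2 (lt_irrefl _)
  · refine e.surjective.forall.2 fun i v hv => ?_
    simp only [e.symm_apply_apply]
    exact matrixCoaction_sub_tmul_mem_coordFlag htri hv

end DimVector

section Bipartite

/-- The coefficient matrix of a comodule whose composition factors form a bipartite pattern:
grouplikes `gᵢ` in the socle are glued to grouplikes `hⱼ` on top by the multiples `cᵢⱼ uᵢⱼ` of
skew primitives `uᵢⱼ ∈ P(gᵢ, hⱼ)`. It encodes the representation `c` of a bipartite quiver. -/
def bipartiteMatrix {K H ι κ : Type*} [Zero H] [SMul K H] [DecidableEq ι] [DecidableEq κ]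
    (g : ι → H) (h : κ → H) (u : Matrix ι κ H) (c : Matrix ι κ K) : Matrix (ι ⊕ κ) (ι ⊕ κ) H :=
  Matrix.fromBlocks (.diagonal g) (.of fun i j => c i j • u i j) 0 (.diagonal h)

lemma blockTriangular_bipartiteMatrix {K H : Type*} [Zero H] [SMul K H] {m n : ℕ} (g : Fin m → H)
    (h : Fin n → H) (u : Matrix (Fin m) (Fin n) H) (c : Matrix (Fin m) (Fin n) K) :
    (bipartiteMatrix g h u c).BlockTriangular finSumFinEquiv := by
  rintro (i | j) (i' | j') hlt
  · exact Matrix.diagonal_apply_ne _ fun hi => by simp [hi] at hlt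
  · simp only [finSumFinEquiv_apply_left, finSumFinEquiv_apply_right, Fin.lt_def,
      Fin.val_natAdd, Fin.val_castAdd] at hlt
    omega
  · rfl
  · exact Matrix.diagonal_apply_ne _ fun hj => by simp [hj] at hlt

lemma isGrouplike_bipartiteMatrix_diag {K H ι κ : Type} [CommRing K] [AddCommGroup H] [Module K H]
    [Coalgebra K H] [DecidableEq ι] [DecidableEq κ] {g : ι → H} {h : κ → H}
    (hg : ∀ i, IsGrouplike K H (g i)) (hh : ∀ j, IsGrouplike K H (h j)) (u : Matrix ι κ H)
    (c : Matrix ι κ K) (i : ι ⊕ κ) : IsGrouplike K H (bipartiteMatrix g h u c i i) := by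
  rcases i with i | j
  · simpa [bipartiteMatrix] using hg i
  · simpa [bipartiteMatrix] using hh j

lemma isMultiplicativeMatrix_bipartiteMatrix {K H ι κ : Type} [CommRing K] [AddCommGroup H]
    [Module K H] [Coalgebra K H] [Fintype ι] [Fintype κ] [DecidableEq ι] [DecidableEq κ]
    {g : ι → H} {h : κ → H} (hg : ∀ i, IsGrouplike K H (g i)) (hh : ∀ j, IsGrouplike K H (h j))
    {u : Matrix ι κ H} (hu : ∀ i j, u i j ∈ skewPrim K H (g i) (h j)) (c : Matrix ι κ K) :
    IsMultiplicativeMatrix K (bipartiteMatrix g h u c) where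
  counit_apply := by
    rintro (i | j) (i' | j')
    · rcases eq_or_ne i i' with rfl | hi <;> simp [bipartiteMatrix, *, (hg _).1]
    · simp [bipartiteMatrix, counit_eq_zero_of_mem_skewPrim (hg i) (hh j') (hu i j')]
    · simp [bipartiteMatrix]
    · rcases eq_or_ne j j' with rfl | hj <;> simp [bipartiteMatrix, *, (hh _).1]
  comul_apply := by
    rintro (i | j) (i' | j')
    · rcases eq_or_ne i i' with rfl | hi <;>
        simp [bipartiteMatrix, Matrix.diagonal_apply, TensorProduct.ite_tmul, *, (hg _).2]
    · simp [bipartiteMatrix, Matrix.diagonal_apply, TensorProduct.ite_tmul, TensorProduct.tmul_ite,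
        (mem_skewPrim K H).1 (hu i j'), TensorProduct.smul_tmul']
    · simp [bipartiteMatrix]
    · rcases eq_or_ne j j' with rfl | hj <;>
        simp [bipartiteMatrix, Matrix.diagonal_apply, TensorProduct.ite_tmul, *, (hh _).2]

end Bipartite

section BipartiteIntertwiner

lemma eq_zero_of_smul_eq_smul {K V : Type*} [Field K] [AddCommGroup V] [Module K V] {x y : V}
    (hxy : x ≠ y) {r : K} (hr : r • x = r • y) : r = 0 := by
  by_contra hr'
  exact hxy (smul_right_injective V hr' hr)

namespace IsMatrixIntertwiner

variable {K H ι κ : Type*} [Field K] [AddCommGroup H] [Module K H] [Fintype ι] [Fintype κ]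
  [DecidableEq ι] [DecidableEq κ] {g : ι → H} {h : κ → H} {u : Matrix ι κ H} {c d : Matrix ι κ K}
  {A : Matrix (ι ⊕ κ) (ι ⊕ κ) K}

lemma inr_inl_eq_zero (hA : IsMatrixIntertwiner A (bipartiteMatrix g h u c)
    (bipartiteMatrix g h u d)) (hgh : Function.Injective (Sum.elim g h)) (j : κ) (i : ι) :
    A (.inr j) (.inl i) = 0 := by
  refine eq_zero_of_smul_eq_smul (hgh.ne Sum.inr_ne_inl) (?_ : _ • h j = _ • g i)
  simpa [bipartiteMatrix, Matrix.diagonal_apply] using hA (.inr j) (.inl i)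

lemma inl_inl_eq_zero (hA : IsMatrixIntertwiner A (bipartiteMatrix g h u c)
    (bipartiteMatrix g h u d)) (hgh : Function.Injective (Sum.elim g h)) {i i' : ι} (hi : i ≠ i') :
    A (.inl i) (.inl i') = 0 := by
  refine eq_zero_of_smul_eq_smul (hgh.ne (Sum.inl_injective.ne hi)) (?_ : _ • g i = _ • g i')
  simpa [bipartiteMatrix, Matrix.diagonal_apply, hA.inr_inl_eq_zero hgh] using hA (.inl i) (.inl i')

lemma inr_inr_eq_zero (hA : IsMatrixIntertwiner A (bipartiteMatrix g h u c)
    (bipartiteMatrix g h u d)) (hgh : Function.Injective (Sum.elim g h)) {j j' : κ} (hj : j ≠ j') :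
    A (.inr j) (.inr j') = 0 := by
  refine eq_zero_of_smul_eq_smul (hgh.ne (Sum.inr_injective.ne hj)) (?_ : _ • h j = _ • h j')
  simpa [bipartiteMatrix, Matrix.diagonal_apply, hA.inr_inl_eq_zero hgh] using hA (.inr j) (.inr j')

lemma inl_inr_smul_add (hA : IsMatrixIntertwiner A (bipartiteMatrix g h u c)
    (bipartiteMatrix g h u d)) (hgh : Function.Injective (Sum.elim g h)) (i : ι) (j : κ) :
    A (.inl i) (.inr j) • g i + A (.inr j) (.inr j) • d i j • u i j =
      A (.inl i) (.inl i) • c i j • u i j + A (.inl i) (.inr j) • h j := by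
  have hl : ∑ k, A (.inl i) (.inl k) • c k j • u k j = A (.inl i) (.inl i) • c i j • u i j :=
    Finset.sum_eq_single_of_mem i (Finset.mem_univ i) fun k _ hk => by
      rw [hA.inl_inl_eq_zero hgh hk.symm, zero_smul]
  have hr : ∑ k, A (.inr k) (.inr j) • d i k • u i k = A (.inr j) (.inr j) • d i j • u i j :=
    Finset.sum_eq_single_of_mem j (Finset.mem_univ j) fun k _ hk => by
      rw [hA.inr_inr_eq_zero hgh hk, zero_smul]
  simpa [bipartiteMatrix, Matrix.diagonal_apply, hl, hr] using hA (.inl i) (.inr j)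

lemma inl_inr_eq_zero_and_mul_eq_mul (hA : IsMatrixIntertwiner A (bipartiteMatrix g h u c)
    (bipartiteMatrix g h u d)) (hgh : Function.Injective (Sum.elim g h)) {i : ι} {j : κ}
    (hu : u i j ∉ Submodule.span K {g i - h j}) :
    A (.inl i) (.inr j) = 0 ∧
      A (.inl i) (.inl i) * c i j = A (.inr j) (.inr j) * d i j := by
  have hne : g i - h j ≠ 0 := sub_ne_zero.2 (hgh.ne Sum.inl_ne_inr)
  have hindep : LinearIndependent K ![g i - h j, u i j] :=
    (LinearIndependent.pair_iff' hne).2 fun r hr => hu (Submodule.mem_span_singleton.2 ⟨r, hr⟩)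
  have hrel : A (.inl i) (.inr j) • (g i - h j) +
      (A (.inr j) (.inr j) * d i j - A (.inl i) (.inl i) * c i j) • u i j = 0 := by
    linear_combination (norm := module) hA.inl_inr_smul_add hgh i j
  exact (LinearIndependent.pair_iff.1 hindep _ _ hrel).imp_right fun h => (sub_eq_zero.1 h).symm

lemma isDiag (hA : IsMatrixIntertwiner A (bipartiteMatrix g h u c) (bipartiteMatrix g h u d))
    (hgh : Function.Injective (Sum.elim g h))
    (hu : ∀ i j, u i j ∉ Submodule.span K {g i - h j}) : A.IsDiag := by
  rintro (i | j) (i' | j') hne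
  · exact hA.inl_inl_eq_zero hgh (ne_of_apply_ne _ hne)
  · exact (hA.inl_inr_eq_zero_and_mul_eq_mul hgh (hu i j')).1
  · exact hA.inr_inl_eq_zero hgh j i'
  · exact hA.inr_inr_eq_zero hgh (ne_of_apply_ne _ hne)

lemma exists_eq_smul_one_of_square {g h : Fin 2 → H} {u : Matrix (Fin 2) (Fin 2) H} {s t : K}
    {A : Matrix (Fin 2 ⊕ Fin 2) (Fin 2 ⊕ Fin 2) K}
    (hA : IsMatrixIntertwiner A (bipartiteMatrix g h u !![1, s; 1, 1])
      (bipartiteMatrix g h u !![1, t; 1, 1]))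
    (hgh : Function.Injective (Sum.elim g h))
    (hu : ∀ i j, u i j ∉ Submodule.span K {g i - h j}) :
    ∃ r : K, A = r • 1 ∧ r * s = r * t := by
  have weight i j := (hA.inl_inr_eq_zero_and_mul_eq_mul hgh (hu i j)).2
  have h00 : A (.inl 0) (.inl 0) = A (.inr 0) (.inr 0) := by simpa using weight 0 0
  have h01 : A (.inl 0) (.inl 0) * s = A (.inr 1) (.inr 1) * t := by simpa using weight 0 1
  have h10 : A (.inl 1) (.inl 1) = A (.inr 0) (.inr 0) := by simpa using weight 1 0
  have h11 : A (.inl 1) (.inl 1) = A (.inr 1) (.inr 1) := by simpa using weight 1 1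
  have hdiag : A.diag = fun _ => A (.inr 1) (.inr 1) := by
    ext (i | j)
    · fin_cases i
      · exact h00.trans (h10.symm.trans h11)
      · exact h11
    · fin_cases j
      · exact h10.symm.trans h11
      · rfl
  refine ⟨A (.inr 1) (.inr 1), ?_, by rw [← h01, h00, ← h10, h11]⟩
  rw [← (hA.isDiag hgh hu).diagonal_diag, hdiag, Matrix.smul_one_eq_diagonal]
  simp

end IsMatrixIntertwiner

end BipartiteIntertwiner

lemma not_discreteCorepType_of_square {K H : Type} [Field K] [Infinite K] [AddCommGroup H]
    [Module K H] [Coalgebra K H] {g h : Fin 2 → H} {u : Matrix (Fin 2) (Fin 2) H}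
    (hg : ∀ i, IsGrouplike K H (g i)) (hh : ∀ j, IsGrouplike K H (h j))
    (hgh : Function.Injective (Sum.elim g h))
    (hu : ∀ i j, IsNontrivialSkewPrim K (g i) (h j) (u i j)) : ¬ DiscreteCorepType K H := by
  intro hH
  let C (t : K) := bipartiteMatrix g h u !![1, t; 1, 1]
  have hC t : IsMultiplicativeMatrix K (C t) :=
    isMultiplicativeMatrix_bipartiteMatrix hg hh (fun i j => (hu i j).mem) _
  have scalar {s t : K} (f : ComodHom K H (hC s).comod (hC t).comod) :
      ∃ r : K, f.toLin = r • LinearMap.id ∧ r * s = r * t := by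
    obtain ⟨r, hr, hrst⟩ := f.isMatrixIntertwiner.exists_eq_smul_one_of_square hgh
      fun i j => (hu i j).notMem_span
    exact ⟨r, LinearMap.toMatrix'.injective (by simpa using hr), hrst⟩
  have hindec t : ((hC t).comod).Indec K H :=
    Comod.indec_of_forall_eq_smul_id fun f => (scalar f).imp fun _ => And.left
  have hdim t : HasDimVector K H (hC t).comod fun x => Nat.card {i // C 0 i i = x} := by
    have hCC i : C t i i = C 0 i i := by rcases i with i | j <;> simp [C, bipartiteMatrix]
    simpa only [hCC] using (hC t).hasDimVector_comod finSumFinEquiv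
      (blockTriangular_bipartiteMatrix g h u _) (isGrouplike_bipartiteMatrix_diag hg hh u _)
  obtain ⟨s, t, hst, f, hf⟩ := hH.exists_ne_comodIso (fun t => (hC t).comod) _ hindec hdim
  obtain ⟨r, hr, hrst⟩ := scalar f
  refine hst (mul_left_cancel₀ ?_ hrst)
  rintro rfl
  obtain ⟨v, hv⟩ := exists_ne (0 : (hC s).comod.carrier)
  exact hv (hf.injective (by simp [hr]))

theorem grouplikes_commute_of_nontrivial_skewPrim_general {K H : Type} [Field K] [Infinite K]
    [Ring H] [Bialgebra K H] (hdiscrete : DiscreteCorepType K H) {a b x y : H}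
    (ha : IsGrouplike K H a) (hb : IsGrouplike K H b) (ha' : IsRegular a) (hb' : IsRegular b)
    (hx : IsNontrivialSkewPrim K 1 a x) (hy : IsNontrivialSkewPrim K 1 b y) :
    a * b = b * a := by
  by_contra hab
  have hay : IsNontrivialSkewPrim K a (a * b) (a * y) := by simpa using hy.mul_left ha ha'.left
  have hya : IsNontrivialSkewPrim K a (b * a) (y * a) := by simpa using hy.mul_right ha ha'.right
  have hxb : IsNontrivialSkewPrim K b (a * b) (x * b) := by simpa using hx.mul_right hb hb'.right
  have hbx : IsNontrivialSkewPrim K b (b * a) (b * x) := by simpa using hx.mul_left hb hb'.left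
  refine not_discreteCorepType_of_square (K := K) (g := ![a, b]) (h := ![a * b, b * a])
    (u := !![a * y, y * a; x * b, b * x]) (Fin.forall_fin_two.2 ⟨ha, hb⟩)
    (Fin.forall_fin_two.2 ⟨ha.mul hb, hb.mul ha⟩) (injective_sumElim_of_not_commute ha' hb' hab)
    ?_ hdiscrete
  simpa only [Fin.forall_fin_two] using And.intro ⟨hay, hya⟩ ⟨hxb, hbx⟩

theorem grouplikes_commute_of_nontrivial_skewPrim
    (K : Type) [Field K] [IsAlgClosed K]
    (H : Type) [Ring H] [HopfAlgebra K H]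
    (hpointed : IsPointedCoalgebra K H) (hdiscrete : DiscreteCorepType K H)
    (a b : H) (ha : IsGrouplike K H a) (hb : IsGrouplike K H b)
    (x y : H)
    (hx : x ∈ skewPrim K H 1 a) (hx' : x ∉ Submodule.span K {(1 : H) - a})
    (hy : y ∈ skewPrim K H 1 b) (hy' : y ∉ Submodule.span K {(1 : H) - b}) :
    a * b = b * a := by
  exact grouplikes_commute_of_nontrivial_skewPrim_general hdiscrete ha hb ha.isRegular hb.isRegular
    ⟨hx, hx'⟩ ⟨hy, hy'⟩
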